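/- arXiv:2507.02848 — 2 statements merged into one kernel-verified Lean document; each statement's English description precedes it below -/
import Mathlib

section
/- For every R-linear map D : B → B and all elements b, b', b₀, b₁, …, b_k ∈ B, one has φ_D((b ⊗ b'^op)·(da₀:=db₀)·(db₁)⋯(db_k)) = (δ_{b₀} ∘ δ_{b₁} ∘ ⋯ ∘ δ_{b_k})(D)(b) · b', where the product (b ⊗ b'^op)·(db₀)·(db₁)⋯(db_k) is taken in the algebra B^e. -/
open TensorProduct MulOpposite

/-- The universal differential `da = 1 ⊗ aᵒᵖ - a ⊗ 1` in `Bᵉ = B ⊗[R] Bᵐᵒᵖ`. -/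
noncomputable def duniv (R : Type*) {B : Type*} [CommRing R] [Ring B] [Algebra R B] (a : B) :
    B ⊗[R] Bᵐᵒᵖ :=
  (1 : B) ⊗ₜ[R] op a - a ⊗ₜ[R] (1 : Bᵐᵒᵖ)

/-- `δ_b(D)(a) = D(a) * b - D(a * b)`. -/
noncomputable def deltaOp (R : Type*) {B : Type*} [CommRing R] [Ring B] [Algebra R B] (b : B)
    (D : B →ₗ[R] B) : B →ₗ[R] B :=
  LinearMap.mulRight R b ∘ₗ D - D ∘ₗ LinearMap.mulRight R b

/-- `φ_D : B ⊗[R] Bᵐᵒᵖ →ₗ[R] B`, `φ_D (a ⊗ cᵒᵖ) = D a * c`. -/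
noncomputable def phiD (R : Type*) {B : Type*} [CommRing R] [Ring B] [Algebra R B]
    (D : B →ₗ[R] B) : B ⊗[R] Bᵐᵒᵖ →ₗ[R] B :=
  TensorProduct.lift (((LinearMap.mul R B).comp D).compl₂
    ((opLinearEquiv R : B ≃ₗ[R] Bᵐᵒᵖ).symm.toLinearMap))

/-! The algebra `Bᵉ` acts on `End_R(B)` from the left: `(a ⊗ cᵒᵖ) · D` is the map
`u ↦ D (u * a) * c`, and `φ_D (x * y) = φ_{y · D} x`. Under this action `da` acts as the operator
`δ_a`, so a product of differentials acts as the composite of the corresponding operators, in the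
same order. -/

section

variable {R B : Type*} [CommRing R] [Ring B] [Algebra R B] (D : B →ₗ[R] B)

theorem phiD_tmul (a : B) (c : Bᵐᵒᵖ) : phiD R D (a ⊗ₜ[R] c) = D a * unop c :=
  rfl

theorem phiD_sub (E : B →ₗ[R] B) : phiD R (D - E) = phiD R D - phiD R E := by
  ext a c
  exact sub_mul (D a) (E a) (unop c)

theorem phiD_mul_tmul (x : B ⊗[R] Bᵐᵒᵖ) (a : B) (c : Bᵐᵒᵖ) :
    phiD R D (x * a ⊗ₜ[R] c) =
      phiD R (LinearMap.mulRight R (unop c) ∘ₗ D ∘ₗ LinearMap.mulRight R a) x := by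
  induction x with
  | zero => simp only [zero_mul, map_zero]
  | tmul u v =>
    calc
      phiD R D (u ⊗ₜ[R] v * a ⊗ₜ[R] c) = D (u * a) * (unop c * unop v) := by
        rw [Algebra.TensorProduct.tmul_mul_tmul, phiD_tmul, unop_mul]
      _ = D (u * a) * unop c * unop v := (mul_assoc _ _ _).symm
  | add x y hx hy => rw [add_mul, map_add, map_add, hx, hy]

theorem phiD_mul_duniv (x : B ⊗[R] Bᵐᵒᵖ) (a : B) :
    phiD R D (x * duniv R a) = phiD R (deltaOp R a D) x := by
  rw [duniv, mul_sub, map_sub, phiD_mul_tmul, phiD_mul_tmul, deltaOp, phiD_sub,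
    LinearMap.sub_apply]
  simp only [unop_op, unop_one, LinearMap.mulRight_one, LinearMap.comp_id, LinearMap.id_comp]

theorem phiD_mul_prod_map_duniv (x : B ⊗[R] Bᵐᵒᵖ) (l : List B) :
    phiD R D (x * (l.map (duniv R)).prod) = phiD R (l.foldr (deltaOp R) D) x := by
  induction l generalizing x with
  | nil => rw [List.map_nil, List.prod_nil, mul_one, List.foldr_nil]
  | cons a l ih =>
    rw [List.map_cons, List.prod_cons, ← mul_assoc, ih, phiD_mul_duniv, List.foldr_cons]

end

theorem stmt0 {R B : Type*} [CommRing R] [Ring B] [Algebra R B]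
    (D : B →ₗ[R] B) (b b' : B) (k : ℕ) (f : Fin (k + 1) → B) :
    phiD R D ((b ⊗ₜ[R] op b') * (List.ofFn fun i => duniv R (f i)).prod) =
      ((List.ofFn f).foldr (deltaOp R) D) b * b' := by
  have h_map : (List.ofFn fun i => duniv R (f i)) = (List.ofFn f).map (duniv R) := by
    rw [List.map_ofFn, Function.comp_def]
  rw [h_map, phiD_mul_prod_map_duniv, phiD_tmul, unop_op]
end

section
/- Let φ : B ⊗_R B → B be an R-linear map satisfying φ(a ⊗ bc) = φ(a ⊗ b)·c for all a, b, c ∈ B, and define D_φ : B → B by D_φ(a) = φ(a ⊗ 1). Then for all b, b₀, b₁, …, b_k ∈ B one has (δ_{b₀} ∘ δ_{b₁} ∘ ⋯ ∘ δ_{b_k})(D_φ)(b) = φ((b ⊗ 1^op)·(db₀)·(db₁)⋯(db_k)), where the product is taken in the algebra B^e. -/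
open TensorProduct MulOpposite

/-- `D_φ : B →ₗ[R] B`, `D_φ a = φ (a ⊗ 1)`. -/
noncomputable def Dphi (R : Type*) {B : Type*} [CommRing R] [Ring B] [Algebra R B]
    (φ : B ⊗[R] Bᵐᵒᵖ →ₗ[R] B) : B →ₗ[R] B :=
  φ ∘ₗ (TensorProduct.mk R B Bᵐᵒᵖ).flip (1 : Bᵐᵒᵖ)

/-!
Right `B`-linearity of `φ` means `φ ((1 ⊗ cᵒᵖ) * x) = φ x * c`, and it is inherited by
`x ↦ φ (x * y)` for every `y` in `Bᵉ`. Since `1 ⊗ cᵒᵖ` commutes with `b ⊗ 1`, this gives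
`δ_c D_φ = D_ψ` with `ψ x = φ (x * dc)`, which can be iterated.
-/

theorem map_one_tmul_op_mul {R A B : Type*} [CommSemiring R] [Semiring A] [Algebra R A]
    [Semiring B] [Algebra R B] {φ : A ⊗[R] Bᵐᵒᵖ →ₗ[R] B}
    (hφ : ∀ (a : A) (b c : B), φ (a ⊗ₜ[R] op (b * c)) = φ (a ⊗ₜ[R] op b) * c)
    (c : B) (x : A ⊗[R] Bᵐᵒᵖ) :
    φ (((1 : A) ⊗ₜ[R] op c) * x) = φ x * c := by
  induction x with
  | zero => simp
  | tmul a b => simpa using hφ a b.unop c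
  | add x y hx hy => rw [mul_add, map_add, hx, hy, map_add, add_mul]

section

variable {R B : Type*} [CommRing R] [Ring B] [Algebra R B]

theorem deltaOp_apply (b : B) (D : B →ₗ[R] B) (a : B) :
    deltaOp R b D a = D a * b - D (a * b) :=
  rfl

theorem Dphi_apply (φ : B ⊗[R] Bᵐᵒᵖ →ₗ[R] B) (a : B) :
    Dphi R φ a = φ (a ⊗ₜ[R] (1 : Bᵐᵒᵖ)) :=
  rfl

theorem tmul_one_mul_duniv (b c : B) :
    (b ⊗ₜ[R] (1 : Bᵐᵒᵖ)) * duniv R c =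
      ((1 : B) ⊗ₜ[R] op c) * (b ⊗ₜ[R] (1 : Bᵐᵒᵖ)) - (b * c) ⊗ₜ[R] (1 : Bᵐᵒᵖ) := by
  simp [duniv, mul_sub]

variable {φ : B ⊗[R] Bᵐᵒᵖ →ₗ[R] B}

theorem deltaOp_Dphi (hφ : ∀ c x, φ (((1 : B) ⊗ₜ[R] op c) * x) = φ x * c) (c : B) :
    deltaOp R c (Dphi R φ) = Dphi R (φ ∘ₗ LinearMap.mulRight R (duniv R c)) := by
  ext b
  calc deltaOp R c (Dphi R φ) b
      = φ (b ⊗ₜ[R] (1 : Bᵐᵒᵖ)) * c - φ ((b * c) ⊗ₜ[R] (1 : Bᵐᵒᵖ)) := by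
        simp only [deltaOp_apply, Dphi_apply]
    _ = φ ((b ⊗ₜ[R] (1 : Bᵐᵒᵖ)) * duniv R c) := by rw [tmul_one_mul_duniv, map_sub, hφ]
    _ = Dphi R (φ ∘ₗ LinearMap.mulRight R (duniv R c)) b := by
        rw [Dphi_apply, LinearMap.comp_apply, LinearMap.mulRight_apply]

theorem foldr_deltaOp_Dphi (hφ : ∀ c x, φ (((1 : B) ⊗ₜ[R] op c) * x) = φ x * c)
    (l : List B) :
    l.foldr (deltaOp R) (Dphi R φ) =
      Dphi R (φ ∘ₗ LinearMap.mulRight R (l.map (duniv R)).prod) := by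
  induction l with
  | nil => simp
  | cons c l ih =>
    set y := (l.map (duniv R)).prod
    have hφy : ∀ c x, (φ ∘ₗ LinearMap.mulRight R y) (((1 : B) ⊗ₜ[R] op c) * x) =
        (φ ∘ₗ LinearMap.mulRight R y) x * c := fun c x ↦ by
      simp only [LinearMap.comp_apply, LinearMap.mulRight_apply, mul_assoc, hφ]
    rw [List.foldr_cons, ih, deltaOp_Dphi hφy, LinearMap.comp_assoc, ← LinearMap.mulRight_mul,
      List.map_cons, List.prod_cons]

end

theorem stmt1 {R B : Type*} [CommRing R] [Ring B] [Algebra R B]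
    (φ : B ⊗[R] Bᵐᵒᵖ →ₗ[R] B)
    (hφ : ∀ a b c : B, φ (a ⊗ₜ[R] op (b * c)) = φ (a ⊗ₜ[R] op b) * c)
    (b : B) (k : ℕ) (f : Fin (k + 1) → B) :
    ((List.ofFn f).foldr (deltaOp R) (Dphi R φ)) b =
      φ ((b ⊗ₜ[R] (1 : Bᵐᵒᵖ)) * (List.ofFn fun i => duniv R (f i)).prod) := by
  rw [foldr_deltaOp_Dphi (map_one_tmul_op_mul hφ), Dphi_apply, LinearMap.comp_apply,
    LinearMap.mulRight_apply, List.map_ofFn, Function.comp_def]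
end
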